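/- For every n ≥ 1, the hypergraph of the voting model with linear semantics—with vertex set {Q, T_1, …, T_n, F_1, …, F_n} and hyperedges {T_i}, {F_i}, {Q, T_i}, and {Q, F_i} for each i = 1, …, n—has hierarchy width exactly 2n + 1. -/

import Mathlib

/-!
Let `k` be the number of voting hyperedges `{Q, v}` (the `Sum.inr` hyperedges) in a subset `E` of
the hyperedges; it is written `E.toRight.card` below.

* Upper bound `hw E ≤ k + 1` (`hw_voting_le`): a component that contains a voting hyperedge loses
  one when that hyperedge is removed, so induction on `k` applies to it; a component without voting
  hyperedges is a single prior hyperedge `{v}`.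
* Star bound `k ≤ hw E` (`le_hw_voting`): all voting hyperedges meet in `Q`, hence lie in one
  component, and removing one hyperedge removes at most one of them.
* Lower bound `k + 1 ≤ hw E` (`succ_le_hw_voting`) when `E` is nonempty and the prior `{v}` of
  every `{Q, v}` in `E` is also in `E`: after removing a prior from the component of `Q`, the star
  bound still gives `k`; after removing some `{Q, v}`, the hypothesis is preserved with `k - 1`
  voting hyperedges, and `{v}` keeps the hyperedge set nonempty, so induction gives `k`.

The full hypergraph satisfies the hypothesis of the last bound with `k = 2 n`.
-/

/-- Connectivity relation between hyperedges within the edge set `E` of a hypergraph whose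
hyperedges have vertex sets given by `dep`. -/
def EdgeConn {α ι : Type*} (dep : ι → Finset α) (E : Finset ι) : ι → ι → Prop :=
  Relation.ReflTransGen fun a b => a ∈ E ∧ b ∈ E ∧ ∃ v, v ∈ dep a ∧ v ∈ dep b

open Classical in
/-- Hierarchy width of the hypergraph with hyperedges `E`, where hyperedge `e` consists of
the vertices `dep e`: `0` if there are no hyperedges; `1 +` the minimum over single-edge
removals for a connected hypergraph; the maximum over connected components otherwise. -/
noncomputable def hw {α ι : Type*} [DecidableEq ι] (dep : ι → Finset α) (E : Finset ι) : ℕ :=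
  E.sup fun e =>
    1 + ((E.filter fun f => EdgeConn dep E e f).attach.inf fun f =>
      ((hw dep ((E.filter fun f => EdgeConn dep E e f).erase f.1) : ℕ∞))).toNat
termination_by E.card
decreasing_by
  exact lt_of_lt_of_le (Finset.card_erase_lt_of_mem f.2)
    (Finset.card_le_card (Finset.filter_subset _ _))

/-- The hyperedges of the voting model with linear semantics.  The vertices are `none` (the
query `Q`) and `some (true, i)` (the voter `T i`), `some (false, i)` (the voter `F i`).
The hyperedge `Sum.inl (b, i)` is the singleton prior hyperedge `{T i}` (for `b = true`) or
`{F i}` (for `b = false`), and `Sum.inr (b, i)` is the voting hyperedge `{Q, T i}` or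
`{Q, F i}`. -/
def votingDepLin (n : ℕ) : (Bool × Fin n) ⊕ (Bool × Fin n) → Finset (Option (Bool × Fin n))
  | Sum.inl (b, i) => {some (b, i)}
  | Sum.inr (b, i) => {none, some (b, i)}

open Classical in
/-- The set of hyperedges in the connected component of the hyperedge `e` within `E`. -/
noncomputable def edgeComp {α ι : Type*} (dep : ι → Finset α) (E : Finset ι) (e : ι) : Finset ι :=
  E.filter fun f => EdgeConn dep E e f

lemma mem_edgeComp {α ι : Type*} {dep : ι → Finset α} {E : Finset ι} {e f : ι} :
    f ∈ edgeComp dep E e ↔ f ∈ E ∧ EdgeConn dep E e f := by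
  classical
  simp [edgeComp]

lemma self_mem_edgeComp {α ι : Type*} {dep : ι → Finset α} {E : Finset ι} {e : ι} (he : e ∈ E) :
    e ∈ edgeComp dep E e :=
  mem_edgeComp.2 ⟨he, Relation.ReflTransGen.refl⟩

lemma hw_eq {α ι : Type*} [DecidableEq ι] (dep : ι → Finset α) (E : Finset ι) :
    hw dep E = E.sup fun e => 1 + ((edgeComp dep E e).attach.inf fun f =>
      ((hw dep ((edgeComp dep E e).erase f.1) : ℕ∞))).toNat := by
  rw [hw]
  rfl

lemma hw_le_of_exists {α ι : Type*} [DecidableEq ι] {dep : ι → Finset α} {E : Finset ι} {m : ℕ}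
    (h : ∀ e ∈ E, ∃ f ∈ edgeComp dep E e, hw dep ((edgeComp dep E e).erase f) ≤ m) :
    hw dep E ≤ m + 1 := by
  rw [hw_eq]
  refine Finset.sup_le fun e he => ?_
  obtain ⟨f, hf, hle⟩ := h e he
  have h1 : ((edgeComp dep E e).attach.inf fun f =>
      ((hw dep ((edgeComp dep E e).erase f.1) : ℕ∞))) ≤ (m : ℕ∞) :=
    (Finset.inf_le (Finset.mem_attach _ ⟨f, hf⟩)).trans (by exact_mod_cast hle)
  have h2 := ENat.toNat_le_of_le_natCast h1
  omega

lemma succ_le_hw_of_forall {α ι : Type*} [DecidableEq ι] {dep : ι → Finset α} {E : Finset ι}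
    {m : ℕ} {e : ι} (he : e ∈ E)
    (h : ∀ f ∈ edgeComp dep E e, m ≤ hw dep ((edgeComp dep E e).erase f)) :
    m + 1 ≤ hw dep E := by
  rw [hw_eq]
  refine le_trans ?_ (Finset.le_sup he)
  have h1 : (m : ℕ∞) ≤ ((edgeComp dep E e).attach.inf fun f =>
      ((hw dep ((edgeComp dep E e).erase f.1) : ℕ∞))) :=
    Finset.le_inf fun f _ => by exact_mod_cast h f.1 f.2
  -- The infimum is over a nonempty set, so it is finite and `toNat` does not collapse it to `0`.
  have h2 : ((edgeComp dep E e).attach.inf fun f =>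
      ((hw dep ((edgeComp dep E e).erase f.1) : ℕ∞))) ≠ ⊤ :=
    ne_top_of_le_ne_top (ENat.natCast_ne_top _)
      (Finset.inf_le (Finset.mem_attach _ ⟨e, self_mem_edgeComp he⟩))
  have h3 := ENat.toNat_le_toNat h1 h2
  rw [ENat.toNat_natCast] at h3
  omega

/-- Any two voting hyperedges meet in the query vertex `Q`. -/
lemma inr_mem_edgeComp {n : ℕ} {E : Finset ((Bool × Fin n) ⊕ (Bool × Fin n))} {v w : Bool × Fin n}
    (hv : Sum.inr v ∈ E) (hw : Sum.inr w ∈ E) :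
    Sum.inr w ∈ edgeComp (votingDepLin n) E (Sum.inr v) :=
  mem_edgeComp.2 ⟨hw, Relation.ReflTransGen.single
    ⟨hv, hw, none, by simp [votingDepLin], by simp [votingDepLin]⟩⟩

lemma inl_mem_edgeComp {n : ℕ} {E : Finset ((Bool × Fin n) ⊕ (Bool × Fin n))} {v w : Bool × Fin n}
    (hv : Sum.inr v ∈ E) (hw : Sum.inr w ∈ E) (hw' : Sum.inl w ∈ E) :
    Sum.inl w ∈ edgeComp (votingDepLin n) E (Sum.inr v) :=
  mem_edgeComp.2 ⟨hw', (mem_edgeComp.1 (inr_mem_edgeComp hv hw)).2.tail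
    ⟨hw, hw', some w, by simp [votingDepLin], by simp [votingDepLin]⟩⟩

/-- A component without voting hyperedges is a single prior hyperedge. -/
lemma edgeComp_subset_singleton {n : ℕ} {E : Finset ((Bool × Fin n) ⊕ (Bool × Fin n))}
    {e : (Bool × Fin n) ⊕ (Bool × Fin n)}
    (h : ∀ v, Sum.inr v ∉ edgeComp (votingDepLin n) E e) (he : e ∈ E) :
    edgeComp (votingDepLin n) E e ⊆ {e} := by
  intro f hf
  rw [Finset.mem_singleton]
  have hf' := (mem_edgeComp.1 hf).2
  clear hf
  induction hf' with
  | refl => rfl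
  | @tail b c hb hbc ih =>
    subst ih
    obtain ⟨hbE, hcE, x, hx, hx'⟩ := hbc
    have hc : c ∈ edgeComp (votingDepLin n) E b :=
      mem_edgeComp.2 ⟨hcE, hb.tail ⟨hbE, hcE, x, hx, hx'⟩⟩
    rcases b with v | v
    · rcases c with w | w
      · simp only [votingDepLin, Finset.mem_singleton] at hx hx'
        rw [hx] at hx'
        exact congrArg Sum.inl (Option.some.inj hx').symm
      · exact absurd hc (h w)
    · exact absurd (self_mem_edgeComp he) (h v)

lemma hw_voting_le {n : ℕ} (k : ℕ) : ∀ E : Finset ((Bool × Fin n) ⊕ (Bool × Fin n)),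
    E.toRight.card ≤ k → hw (votingDepLin n) E ≤ k + 1 := by
  induction k with
  | zero =>
    intro E hE
    refine hw_le_of_exists fun e he => ⟨e, self_mem_edgeComp he, ?_⟩
    have h : ∀ v, Sum.inr v ∉ edgeComp (votingDepLin n) E e := by
      intro v hv
      have : v ∈ E.toRight := Finset.mem_toRight.2 (mem_edgeComp.1 hv).1
      rw [Finset.card_eq_zero.1 (Nat.le_zero.1 hE)] at this
      simp at this
    rw [(Finset.erase_eq_empty_iff _ _).2 (Finset.subset_singleton_iff.1
      (edgeComp_subset_singleton h he)), hw_eq]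
    simp
  | succ k ih =>
    intro E hE
    refine hw_le_of_exists fun e he => ?_
    by_cases h : ∃ v, Sum.inr v ∈ edgeComp (votingDepLin n) E e
    · obtain ⟨v, hv⟩ := h
      refine ⟨_, hv, ih _ ?_⟩
      have hsub : ((edgeComp (votingDepLin n) E e).erase (Sum.inr v)).toRight
          ⊆ E.toRight.erase v := by
        intro w hw
        simp only [Finset.mem_toRight, Finset.mem_erase] at hw ⊢
        exact ⟨fun h => hw.1 (by rw [h]), (mem_edgeComp.1 hw.2).1⟩
      have h1 := Finset.card_le_card hsub
      rw [Finset.card_erase_of_mem (Finset.mem_toRight.2 (mem_edgeComp.1 hv).1)] at h1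
      omega
    · push Not at h
      refine ⟨e, self_mem_edgeComp he, ?_⟩
      rw [(Finset.erase_eq_empty_iff _ _).2 (Finset.subset_singleton_iff.1
        (edgeComp_subset_singleton h he)), hw_eq]
      simp

lemma le_hw_voting {n : ℕ} (k : ℕ) : ∀ E : Finset ((Bool × Fin n) ⊕ (Bool × Fin n)),
    k ≤ E.toRight.card → k ≤ hw (votingDepLin n) E := by
  induction k with
  | zero => intro E _; exact Nat.zero_le _
  | succ k ih =>
    intro E hE
    obtain ⟨v, hv⟩ := Finset.card_pos.1 (lt_of_lt_of_le k.succ_pos hE)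
    rw [Finset.mem_toRight] at hv
    refine succ_le_hw_of_forall hv fun f hf => ih _ ?_
    rcases f with u | u
    · have hsub : E.toRight ⊆
          ((edgeComp (votingDepLin n) E (Sum.inr v)).erase (Sum.inl u)).toRight := by
        intro w hw
        simp only [Finset.mem_toRight, Finset.mem_erase] at hw ⊢
        exact ⟨by simp, inr_mem_edgeComp hv hw⟩
      have h1 := Finset.card_le_card hsub
      omega
    · have hsub : E.toRight.erase u ⊆
          ((edgeComp (votingDepLin n) E (Sum.inr v)).erase (Sum.inr u)).toRight := by
        intro w hw
        simp only [Finset.mem_toRight, Finset.mem_erase] at hw ⊢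
        exact ⟨by simpa using hw.1, inr_mem_edgeComp hv hw.2⟩
      have h1 := Finset.card_le_card hsub
      have h2 := Finset.pred_card_le_card_erase (s := E.toRight) (a := u)
      omega

lemma succ_le_hw_voting {n : ℕ} (k : ℕ) : ∀ E : Finset ((Bool × Fin n) ⊕ (Bool × Fin n)),
    k ≤ E.toRight.card → E.Nonempty → (∀ v, Sum.inr v ∈ E → Sum.inl v ∈ E) →
    k + 1 ≤ hw (votingDepLin n) E := by
  induction k with
  | zero =>
    rintro E - ⟨e, he⟩ -
    exact succ_le_hw_of_forall he fun f hf => Nat.zero_le _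
  | succ k ih =>
    intro E hE _ hpair
    obtain ⟨v, hv⟩ := Finset.card_pos.1 (lt_of_lt_of_le k.succ_pos hE)
    rw [Finset.mem_toRight] at hv
    refine succ_le_hw_of_forall hv fun f hf => ?_
    rcases f with u | u
    · have hsub : E.toRight ⊆
          ((edgeComp (votingDepLin n) E (Sum.inr v)).erase (Sum.inl u)).toRight := by
        intro w hw
        simp only [Finset.mem_toRight, Finset.mem_erase] at hw ⊢
        exact ⟨by simp, inr_mem_edgeComp hv hw⟩
      exact le_hw_voting _ _ (hE.trans (Finset.card_le_card hsub))
    · have hu := (mem_edgeComp.1 hf).1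
      refine ih _ ?_ ⟨Sum.inl u, ?_⟩ fun w hw => ?_
      · have hsub : E.toRight.erase u ⊆
            ((edgeComp (votingDepLin n) E (Sum.inr v)).erase (Sum.inr u)).toRight := by
          intro w hw
          simp only [Finset.mem_toRight, Finset.mem_erase] at hw ⊢
          exact ⟨by simpa using hw.1, inr_mem_edgeComp hv hw.2⟩
        have h1 := Finset.card_le_card hsub
        have h2 := Finset.pred_card_le_card_erase (s := E.toRight) (a := u)
        omega
      · exact Finset.mem_erase.2 ⟨by simp, inl_mem_edgeComp hv hu (hpair u hu)⟩
      · have hw' := (mem_edgeComp.1 (Finset.mem_erase.1 hw).2).1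
        exact Finset.mem_erase.2 ⟨by simp, inl_mem_edgeComp hv hw' (hpair w hw')⟩

/-- For every `n ≥ 1`, the hypergraph of the voting model with linear semantics has
hierarchy width exactly `2n + 1`. -/
theorem stmt10 (n : ℕ) (hn : 1 ≤ n) : hw (votingDepLin n) Finset.univ = 2 * n + 1 := by
  have hcard : (Finset.univ : Finset ((Bool × Fin n) ⊕ (Bool × Fin n))).toRight.card = 2 * n := by
    have : (Finset.univ : Finset ((Bool × Fin n) ⊕ (Bool × Fin n))).toRight = Finset.univ := by
      ext w
      simp
    rw [this]
    simp
  exact le_antisymm (hw_voting_le _ _ hcard.le)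
    (succ_le_hw_voting _ _ hcard.ge ⟨Sum.inl (true, ⟨0, hn⟩), Finset.mem_univ _⟩
      fun _ _ => Finset.mem_univ _)
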